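/- arXiv:2503.11126 — 5 statements merged into one kernel-verified Lean document; each statement's English description precedes it below -/
import Mathlib

section
/- Let λ ∈ (0,1) and k ≥ 1, let T ⊆ M be a finite set with |T| > k, and let S = {z_1, …, z_k} be produced by greedy selection of k items from T with parameter λ. Then for every t ∈ T ∖ S one has Q(S ∪ {t}) − Q(S) ≤ F(S)/(k·λ); equivalently, q(t) ≤ F(S)/(k·λ). -/
open Finset

def IsGreedySel {ι : Type*} (qf : ι → ℝ) (df : ι → ι → ℝ) (a b : ℝ)
    (T : Finset ι) (k : ℕ) (z : Fin k → ι) : Prop :=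
  Function.Injective z ∧ (∀ i, z i ∈ T) ∧
  (∀ hk : 0 < k, ∀ t ∈ T, qf t ≤ qf (z ⟨0, hk⟩)) ∧
  ∀ i : Fin k, ∀ t ∈ T, (∀ j : Fin k, j < i → t ≠ z j) →
    a * qf t + b * ∑ j ∈ Finset.filter (fun j => j < i) Finset.univ, df t (z j) ≤
      a * qf (z i) + b * ∑ j ∈ Finset.filter (fun j => j < i) Finset.univ, df (z i) (z j)

noncomputable def Qsum {M : Type*} (q : M → ℝ) (S : Finset M) : ℝ := ∑ u ∈ S, q u

noncomputable def Dsum {M : Type*} [MetricSpace M] [DecidableEq M] (S : Finset M) : ℝ :=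
  ∑ p ∈ S.offDiag, dist p.1 p.2

noncomputable def Fobj {M : Type*} [MetricSpace M] [DecidableEq M]
    (q : M → ℝ) (lam : ℝ) (S : Finset M) : ℝ :=
  lam * Qsum q S + (1 - lam) * Dsum S

def IsOptSubset {M : Type*} [MetricSpace M] [DecidableEq M] (q : M → ℝ) (lam : ℝ)
    (T : Finset M) (k : ℕ) (O : Finset M) : Prop :=
  O ⊆ T ∧ O.card = k ∧ ∀ B ⊆ T, B.card = k → Fobj q lam B ≤ Fobj q lam O

/-! Since `t` is never selected, it competes at every step, and dropping the nonnegative distances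
from `t` to the earlier items gives `λ q(t) ≤ λ q(zᵢ) + (1 - λ) ∑_{j < i} d(zᵢ, zⱼ)`. Summing over
the `k` steps counts each quality of a selected item once and each pair of selected items in only
one order, so the total is at most `F(S)`. -/

section PairSums

variable {κ ι N : Type*} [Fintype κ] [Preorder κ] [DecidableLT κ] [DecidableEq ι]
  [AddCommMonoid N] [PartialOrder N] [IsOrderedAddMonoid N]

lemma sum_sum_lt_le_sum_offDiag_image {z : κ → ι} (hz : Function.Injective z)
    {d : ι → ι → N} (hd : ∀ u v, 0 ≤ d u v) :
    ∑ i, ∑ j with j < i, d (z i) (z j) ≤ ∑ p ∈ (univ.image z).offDiag, d p.1 p.2 := by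
  have hsub : ({p : κ × κ | p.2 < p.1} : Finset (κ × κ)).image (Prod.map z z) ⊆
      (univ.image z).offDiag := by
    rintro _ hp
    obtain ⟨⟨i, j⟩, hij, rfl⟩ := mem_image.1 hp
    have hji : j < i := (mem_filter.1 hij).2
    exact mem_offDiag.2 ⟨mem_image_of_mem z (mem_univ i), mem_image_of_mem z (mem_univ j),
      hz.ne hji.ne'⟩
  calc ∑ i, ∑ j with j < i, d (z i) (z j)
      = ∑ p : κ × κ with p.2 < p.1, d (z p.1) (z p.2) := by
        simp only [sum_filter, Fintype.sum_prod_type]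
    _ = ∑ p ∈ ({p : κ × κ | p.2 < p.1} : Finset (κ × κ)).image (Prod.map z z), d p.1 p.2 :=
        (sum_image (f := fun p => d p.1 p.2) (hz.prodMap hz).injOn).symm
    _ ≤ ∑ p ∈ (univ.image z).offDiag, d p.1 p.2 :=
        sum_le_sum_of_subset_of_nonneg hsub fun _ _ _ => hd _ _

end PairSums

namespace IsGreedySel

variable {ι : Type*} {q : ι → ℝ} {d : ι → ι → ℝ} {a b : ℝ} {T : Finset ι} {k : ℕ}
  {z : Fin k → ι} {t : ι}

lemma mul_quality_le (hz : IsGreedySel q d a b T k z) (hd : ∀ u v, 0 ≤ d u v) (hb : 0 ≤ b)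
    (htT : t ∈ T) {i : Fin k} (ht : ∀ j < i, t ≠ z j) :
    a * q t ≤ a * q (z i) + b * ∑ j with j < i, d (z i) (z j) := by
  obtain ⟨-, -, -, hgreedy⟩ := hz
  calc a * q t
      ≤ a * q t + b * ∑ j with j < i, d t (z j) :=
        le_add_of_nonneg_right (mul_nonneg hb (sum_nonneg fun _ _ => hd _ _))
    _ ≤ a * q (z i) + b * ∑ j with j < i, d (z i) (z j) := hgreedy i t htT ht

lemma card_mul_quality_le (hz : IsGreedySel q d a b T k z) (hd : ∀ u v, 0 ≤ d u v) (hb : 0 ≤ b)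
    (htT : t ∈ T) (ht : ∀ j, t ≠ z j) :
    k * (a * q t) ≤ a * ∑ i, q (z i) + b * ∑ i, ∑ j with j < i, d (z i) (z j) := by
  calc k * (a * q t)
      = ∑ _i : Fin k, a * q t := by simp
    _ ≤ ∑ i, (a * q (z i) + b * ∑ j with j < i, d (z i) (z j)) :=
        sum_le_sum fun _ _ => hz.mul_quality_le hd hb htT fun j _ => ht j
    _ = a * ∑ i, q (z i) + b * ∑ i, ∑ j with j < i, d (z i) (z j) := by
        rw [sum_add_distrib, ← mul_sum, ← mul_sum]

end IsGreedySel

lemma Qsum_insert_sub_Qsum {M : Type*} [DecidableEq M] (q : M → ℝ) {S : Finset M} {t : M}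
    (ht : t ∉ S) : Qsum q (insert t S) - Qsum q S = q t :=
  sub_eq_of_eq_add (sum_insert ht)

theorem stmt_0_general {ι : Type*} [DecidableEq ι] {q : ι → ℝ} {d : ι → ι → ℝ}
    (hd : ∀ u v, 0 ≤ d u v) {a b : ℝ} (ha : 0 < a) (hb : 0 ≤ b) {k : ℕ} (hk : 1 ≤ k)
    {T : Finset ι} {z : Fin k → ι} (hz : IsGreedySel q d a b T k z) {t : ι}
    (ht : t ∈ T \ univ.image z) :
    q t ≤ (a * Qsum q (univ.image z) + b * ∑ p ∈ (univ.image z).offDiag, d p.1 p.2) /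
      (k * a) := by
  obtain ⟨htT, htz⟩ := mem_sdiff.1 ht
  have hne : ∀ j, t ≠ z j := fun j h => htz (h ▸ mem_image_of_mem z (mem_univ j))
  have hinj : Function.Injective z := hz.1
  have hQ : Qsum q (univ.image z) = ∑ i, q (z i) := sum_image hinj.injOn
  have hk0 : (0 : ℝ) < k := Nat.cast_pos.2 hk
  rw [le_div_iff₀' (mul_pos hk0 ha), mul_assoc, hQ]
  calc k * (a * q t)
      ≤ a * ∑ i, q (z i) + b * ∑ i, ∑ j with j < i, d (z i) (z j) :=
        hz.card_mul_quality_le hd hb htT hne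
    _ ≤ a * ∑ i, q (z i) + b * ∑ p ∈ (univ.image z).offDiag, d p.1 p.2 := by
        gcongr
        exact sum_sum_lt_le_sum_offDiag_image hinj hd

theorem stmt_0 {M : Type*} [MetricSpace M] [DecidableEq M]
    (q : M → ℝ) (hq : ∀ u, 0 ≤ q u)
    (lam : ℝ) (hlam0 : 0 < lam) (hlam1 : lam < 1)
    (k : ℕ) (hk : 1 ≤ k)
    (T : Finset M) (hT : k < T.card)
    (z : Fin k → M)
    (hz : IsGreedySel q (fun u v => dist u v) lam (1 - lam) T k z)
    (S : Finset M) (hS : S = Finset.univ.image z)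
    (t : M) (ht : t ∈ T \ S) :
    Qsum q (insert t S) - Qsum q S ≤ Fobj q lam S / (k * lam) ∧
      q t ≤ Fobj q lam S / (k * lam) := by
  subst hS
  have hqt : q t ≤ Fobj q lam (univ.image z) / (k * lam) :=
    stmt_0_general (fun _ _ => dist_nonneg) hlam0 (sub_nonneg.2 hlam1.le) hk hz ht
  exact ⟨(Qsum_insert_sub_Qsum q (mem_sdiff.1 ht).2).trans_le hqt, hqt⟩
end

section
/- Let λ ∈ (0,1) and k ≥ 2, let T ⊆ M be a finite set with |T| > k, and let S = {z_1, …, z_k} be produced by greedy selection of k items from T with parameter λ. Then for every t ∈ T ∖ S one has min_{z ∈ S} d(t, z) ≤ 2.5·F(S)/(k·(k−1)·(1−λ)). -/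
open Finset

/-!
Every greedy step prefers `z i` to the rejected point `t`, so the marginal gain of `z i` is at least
that of `t`, hence at least `b * (i * r)`, where `r` is the least distance from `t` to the selected
points. Summing over `i` bounds `b * (k * (k - 1) / 2) * r` by the total of the gains, in which each
unordered pair of selected points is counted once, whereas the dispersion counts it twice. The
resulting constants are `2` for the quality and `1` for the dispersion, both below `2.5`.
-/

section OffDiag

variable {κ ι R : Type*} [AddCommMonoid R]

lemma sum_offDiag_image [DecidableEq ι] {z : κ → ι} {s : Finset κ} (hz : Set.InjOn z s)
    (f : ι → ι → R) :
    ∑ p ∈ (s.image z).offDiag, f p.1 p.2 = ∑ p ∈ s.offDiag, f (z p.1) (z p.2) := by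
  refine (sum_nbij (Prod.map z z) ?mapsTo ?injOn ?surjOn fun _ _ ↦ rfl).symm
  case mapsTo =>
    intro p hp
    obtain ⟨h₁, h₂, hne⟩ := mem_offDiag.1 hp
    exact mem_offDiag.2 ⟨mem_image_of_mem z h₁, mem_image_of_mem z h₂, hz.ne h₁ h₂ hne⟩
  case injOn =>
    refine (hz.prodMap hz).mono fun p hp ↦ ?_
    obtain ⟨h₁, h₂, -⟩ := mem_offDiag.1 hp
    exact ⟨h₁, h₂⟩
  case surjOn =>
    rintro ⟨x, y⟩ hxy
    obtain ⟨hx, hy, hne⟩ := mem_offDiag.1 hxy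
    obtain ⟨i, hi, rfl⟩ := mem_image.1 hx
    obtain ⟨j, hj, rfl⟩ := mem_image.1 hy
    exact ⟨(i, j), mem_offDiag.2 ⟨hi, hj, ne_of_apply_ne z hne⟩, rfl⟩

lemma sum_offDiag_univ_eq_two_nsmul_sum_Iio [Fintype κ] [LinearOrder κ] [LocallyFiniteOrderBot κ]
    (f : κ → κ → R) (hf : ∀ i j, f i j = f j i) :
    ∑ p ∈ (univ : Finset κ).offDiag, f p.1 p.2 = 2 • ∑ i, ∑ j ∈ Iio i, f i j := by
  have sum_gt : ∑ p ∈ (univ : Finset κ).offDiag with p.2 < p.1, f p.1 p.2 =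
      ∑ i, ∑ j ∈ Iio i, f i j :=
    sum_finset_product' _ _ _ (by grind)
  have sum_le : ∑ p ∈ (univ : Finset κ).offDiag with ¬ p.2 < p.1, f p.1 p.2 =
      ∑ i, ∑ j ∈ Iio i, f i j := by
    rw [sum_finset_product_right' _ univ Iio (by grind)]
    simp only [hf]
  rw [← sum_filter_add_sum_filter_not _ (fun p : κ × κ ↦ p.2 < p.1), sum_gt, sum_le, two_nsmul]

end OffDiag

lemma sum_fin_val_eq_choose_two (k : ℕ) : ∑ i : Fin k, (i : ℕ) = k.choose 2 := by
  rw [Fin.sum_univ_eq_sum_range (fun n ↦ n), sum_range_id, Nat.choose_two_right]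

namespace IsGreedySel

variable {ι : Type*} {q : ι → ℝ} {d : ι → ι → ℝ} {a b r : ℝ} {T : Finset ι} {k : ℕ}
  {z : Fin k → ι} {t : ι}

lemma marginal_le (hz : IsGreedySel q d a b T k z) (ht : t ∈ T) {i : Fin k}
    (htz : ∀ j < i, t ≠ z j) :
    a * q t + b * ∑ j ∈ Iio i, d t (z j) ≤ a * q (z i) + b * ∑ j ∈ Iio i, d (z i) (z j) := by
  simpa only [filter_gt_eq_Iio] using hz.2.2.2 i t ht htz

lemma mul_le_marginal (hz : IsGreedySel q d a b T k z) (ha : 0 ≤ a) (hb : 0 ≤ b) (ht : t ∈ T)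
    {i : Fin k} (htz : ∀ j < i, t ≠ z j) (hqt : 0 ≤ q t) (hr : ∀ j < i, r ≤ d t (z j)) :
    b * (i * r) ≤ a * q (z i) + b * ∑ j ∈ Iio i, d (z i) (z j) := by
  have mul_le_sum : (i : ℝ) * r ≤ ∑ j ∈ Iio i, d t (z j) := by
    simpa only [Fin.card_Iio, nsmul_eq_mul] using
      card_nsmul_le_sum (Iio i) (fun j ↦ d t (z j)) r fun j hj ↦ hr j (mem_Iio.1 hj)
  calc b * (i * r) ≤ b * ∑ j ∈ Iio i, d t (z j) := by gcongr
    _ ≤ a * q t + b * ∑ j ∈ Iio i, d t (z j) := le_add_of_nonneg_left (mul_nonneg ha hqt)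
    _ ≤ a * q (z i) + b * ∑ j ∈ Iio i, d (z i) (z j) := hz.marginal_le ht htz

lemma choose_two_mul_le (hz : IsGreedySel q d a b T k z) (ha : 0 ≤ a) (hb : 0 ≤ b) (ht : t ∈ T)
    (htz : ∀ i, t ≠ z i) (hqt : 0 ≤ q t) (hr : ∀ i, r ≤ d t (z i)) :
    b * (k.choose 2 * r) ≤ a * ∑ i, q (z i) + b * ∑ i, ∑ j ∈ Iio i, d (z i) (z j) := by
  calc b * (k.choose 2 * r) = ∑ i : Fin k, b * (i * r) := by
        rw [← mul_sum, ← sum_mul, ← sum_fin_val_eq_choose_two, Nat.cast_sum]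
    _ ≤ ∑ i, (a * q (z i) + b * ∑ j ∈ Iio i, d (z i) (z j)) :=
        sum_le_sum fun i _ ↦ hz.mul_le_marginal ha hb ht (fun j _ ↦ htz j) hqt fun j _ ↦ hr j
    _ = a * ∑ i, q (z i) + b * ∑ i, ∑ j ∈ Iio i, d (z i) (z j) := by
        rw [sum_add_distrib, mul_sum, mul_sum]

lemma mul_le_Qsum_add_sum_offDiag [DecidableEq ι] (hz : IsGreedySel q d a b T k z)
    (hd : ∀ u v, d u v = d v u) (ha : 0 ≤ a) (hb : 0 ≤ b) (ht : t ∈ T) (htz : ∀ i, t ≠ z i)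
    (hqt : 0 ≤ q t) (hr : ∀ i, r ≤ d t (z i)) :
    r * (k * (k - 1) * b) ≤
      2 * (a * Qsum q (univ.image z)) + b * ∑ p ∈ (univ.image z).offDiag, d p.1 p.2 := by
  have quality : Qsum q (univ.image z) = ∑ i, q (z i) := sum_image hz.1.injOn
  have dispersion : ∑ p ∈ (univ.image z).offDiag, d p.1 p.2 =
      2 * ∑ i, ∑ j ∈ Iio i, d (z i) (z j) := by
    rw [sum_offDiag_image hz.1.injOn,
      sum_offDiag_univ_eq_two_nsmul_sum_Iio (fun i j ↦ d (z i) (z j)) fun i j ↦ hd (z i) (z j),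
      nsmul_eq_mul, Nat.cast_ofNat]
  have greedy := hz.choose_two_mul_le ha hb ht htz hqt hr
  rw [Nat.cast_choose_two] at greedy
  rw [quality, dispersion]
  linarith

end IsGreedySel

lemma two_mul_Qsum_add_Dsum_le_mul_Fobj {M : Type*} [MetricSpace M] [DecidableEq M] {q : M → ℝ}
    {lam c : ℝ} {S : Finset M} (hq : ∀ u ∈ S, 0 ≤ q u) (hlam0 : 0 ≤ lam) (hlam1 : lam ≤ 1)
    (hc : 2 ≤ c) : 2 * (lam * Qsum q S) + (1 - lam) * Dsum S ≤ c * Fobj q lam S := by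
  have quality_nonneg : 0 ≤ lam * Qsum q S := mul_nonneg hlam0 (sum_nonneg hq)
  have dispersion_nonneg : 0 ≤ (1 - lam) * Dsum S :=
    mul_nonneg (sub_nonneg.2 hlam1) (sum_nonneg fun _ _ ↦ dist_nonneg)
  rw [Fobj, mul_add]
  exact add_le_add (mul_le_mul_of_nonneg_right hc quality_nonneg)
    (le_mul_of_one_le_left dispersion_nonneg (one_le_two.trans hc))

theorem stmt_1_general {ι : Type*} [DecidableEq ι] {q : ι → ℝ} {d : ι → ι → ℝ}
    (hd : ∀ u v, d u v = d v u) {a b : ℝ} (ha : 0 ≤ a) (hb : 0 ≤ b) {k : ℕ} (hk : 0 < k)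
    {T : Finset ι} {z : Fin k → ι} (hz : IsGreedySel q d a b T k z) {t : ι}
    (ht : t ∈ T \ univ.image z) (hqt : 0 ≤ q t) :
    ∃ u ∈ univ.image z, d t u * (k * (k - 1) * b) ≤
      2 * (a * Qsum q (univ.image z)) + b * ∑ p ∈ (univ.image z).offDiag, d p.1 p.2 := by
  obtain ⟨htT, htS⟩ := mem_sdiff.1 ht
  have mem_S (i : Fin k) : z i ∈ univ.image z := mem_image_of_mem z (mem_univ i)
  have htz (i : Fin k) : t ≠ z i := fun h ↦ htS (h ▸ mem_S i)
  obtain ⟨u, hu, nearest⟩ := exists_min_image (univ.image z) (d t) ⟨_, mem_S ⟨0, hk⟩⟩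
  exact ⟨u, hu, hz.mul_le_Qsum_add_sum_offDiag hd ha hb htT htz hqt fun i ↦ nearest _ (mem_S i)⟩

theorem stmt_1 {M : Type*} [MetricSpace M] [DecidableEq M]
    (q : M → ℝ) (hq : ∀ u, 0 ≤ q u)
    (lam : ℝ) (hlam0 : 0 < lam) (hlam1 : lam < 1)
    (k : ℕ) (hk : 2 ≤ k)
    (T : Finset M) (hT : k < T.card)
    (z : Fin k → M)
    (hz : IsGreedySel q (fun u v => dist u v) lam (1 - lam) T k z)
    (S : Finset M) (hS : S = Finset.univ.image z)
    (t : M) (ht : t ∈ T \ S) :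
    ∃ zz ∈ S, dist t zz ≤ 2.5 * Fobj q lam S / (k * (k - 1) * (1 - lam)) := by
  subst hS
  have hk' : (2 : ℝ) ≤ k := mod_cast hk
  have denominator_pos : 0 < k * (k - 1) * (1 - lam) :=
    mul_pos (mul_pos (by linarith) (by linarith)) (sub_pos.2 hlam1)
  obtain ⟨u, hu, htu⟩ :=
    stmt_1_general dist_comm hlam0.le (sub_nonneg.2 hlam1.le) (by lia) hz ht (hq t)
  exact ⟨u, hu, (le_div_iff₀ denominator_pos).2 <|
    htu.trans <| two_mul_Qsum_add_Dsum_le_mul_Fobj (fun v _ ↦ hq v) hlam0.le hlam1.le (by norm_num)⟩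
end

section
/- Let λ ∈ (0,1) and k ≥ 1, let T ⊆ M be a finite set with |T| > k, and let S = {z_1, …, z_k} be produced by greedy selection of k items from T with parameter λ. Then for every t ∈ T ∖ S one has F(S) ≥ (1−λ)·Σ_{i=1}^{k−1} (k−i)·d(t, z_i) + λ·k·q(t). -/
open Finset

/-!
An unselected `t` was available in every round, so it satisfies all `k` greedy inequalities; sum
them. On the left `d(t, zⱼ)` occurs once for each of the `k - j` rounds after the one choosing `zⱼ`.
On the right each pair of selected elements is counted once, whereas `D(S)` counts it twice.
-/

section Sums

variable {ι : Type*} [Fintype ι] [Preorder ι] [LocallyFiniteOrderBot ι]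

theorem sum_sum_Iio_eq_sum_card_Ioi_nsmul {A : Type*} [LocallyFiniteOrderTop ι] [AddCommMonoid A]
    (f : ι → A) : ∑ i, ∑ j ∈ Iio i, f j = ∑ j, #(Ioi j) • f j := by
  calc ∑ i, ∑ j ∈ Iio i, f j
      = ∑ j, ∑ _i ∈ Ioi j, f j := sum_comm' (by simp)
    _ = ∑ j, #(Ioi j) • f j := by simp only [sum_const]

theorem sum_sum_Iio_le_sum_offDiag_image {κ A : Type*} [DecidableEq κ] [AddCommMonoid A]
    [PartialOrder A] [IsOrderedAddMonoid A] {z : ι → κ} (hz : Function.Injective z)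
    {f : κ → κ → A} (hf : ∀ u v, 0 ≤ f u v) :
    ∑ i, ∑ j ∈ Iio i, f (z i) (z j) ≤ ∑ p ∈ (univ.image z).offDiag, f p.1 p.2 := by
  have pair_injective : Function.Injective fun p : Σ _ : ι, ι ↦ (z p.1, z p.2) := by
    rintro ⟨i, j⟩ ⟨i', j'⟩ h
    obtain rfl : i = i' := hz (congrArg Prod.fst h)
    obtain rfl : j = j' := hz (congrArg Prod.snd h)
    rfl
  calc ∑ i, ∑ j ∈ Iio i, f (z i) (z j)
      = ∑ p ∈ univ.sigma Iio, f (z p.1) (z p.2) := sum_sigma' _ _ _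
    _ = ∑ p ∈ (univ.sigma Iio).image fun p ↦ (z p.1, z p.2), f p.1 p.2 :=
        (sum_image (f := fun p : κ × κ ↦ f p.1 p.2) pair_injective.injOn).symm
    _ ≤ ∑ p ∈ (univ.image z).offDiag, f p.1 p.2 := by
        refine sum_le_sum_of_subset_of_nonneg (image_subset_iff.2 ?_) fun p _ _ ↦ hf p.1 p.2
        rintro ⟨i, j⟩ hij
        have hji : j < i := by simpa using hij
        simpa [hz.eq_iff] using hji.ne'

end Sums

namespace IsGreedySel

variable {ι : Type*} [DecidableEq ι] {q : ι → ℝ} {d : ι → ι → ℝ} {a b : ℝ} {T : Finset ι} {k : ℕ}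
  {z : Fin k → ι} {t : ι}

theorem score_le (hz : IsGreedySel q d a b T k z) (ht : t ∈ T \ univ.image z) (i : Fin k) :
    a * q t + b * ∑ j ∈ Iio i, d t (z j) ≤ a * q (z i) + b * ∑ j ∈ Iio i, d (z i) (z j) := by
  obtain ⟨htT, ht_image⟩ := mem_sdiff.1 ht
  have ht_ne (j : Fin k) : t ≠ z j := by
    rintro rfl
    exact ht_image (mem_image_of_mem z (mem_univ j))
  simpa only [filter_gt_eq_Iio] using hz.2.2.2 i t htT fun j _ ↦ ht_ne j

theorem sum_score_le (hz : IsGreedySel q d a b T k z) (ht : t ∈ T \ univ.image z) :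
    b * ∑ i : Fin k, ((k - 1 - (i : ℕ) : ℕ) : ℝ) * d t (z i) + a * k * q t ≤
      a * ∑ i, q (z i) + b * ∑ i, ∑ j ∈ Iio i, d (z i) (z j) := by
  have sum_dist : ∑ i, ∑ j ∈ Iio i, d t (z j) =
      ∑ i : Fin k, ((k - 1 - (i : ℕ) : ℕ) : ℝ) * d t (z i) := by
    simp only [sum_sum_Iio_eq_sum_card_Ioi_nsmul, Fin.card_Ioi, nsmul_eq_mul]
  calc b * ∑ i : Fin k, ((k - 1 - (i : ℕ) : ℕ) : ℝ) * d t (z i) + a * k * q t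
      = ∑ i, (a * q t + b * ∑ j ∈ Iio i, d t (z j)) := by
        rw [← sum_dist, sum_add_distrib, Fin.sum_const, nsmul_eq_mul, mul_sum]
        ring
    _ ≤ ∑ i, (a * q (z i) + b * ∑ j ∈ Iio i, d (z i) (z j)) :=
        sum_le_sum fun i _ ↦ hz.score_le ht i
    _ = a * ∑ i, q (z i) + b * ∑ i, ∑ j ∈ Iio i, d (z i) (z j) := by
        rw [sum_add_distrib, ← mul_sum, ← mul_sum]

end IsGreedySel

theorem stmt_2_general {ι : Type*} [DecidableEq ι] {q : ι → ℝ} {d : ι → ι → ℝ}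
    (hd : ∀ u v, 0 ≤ d u v) {a b : ℝ} (hb : 0 ≤ b) {T : Finset ι} {k : ℕ} {z : Fin k → ι}
    (hz : IsGreedySel q d a b T k z) {t : ι} (ht : t ∈ T \ univ.image z) :
    b * ∑ i : Fin k, ((k - 1 - (i : ℕ) : ℕ) : ℝ) * d t (z i) + a * k * q t ≤
      a * ∑ u ∈ univ.image z, q u + b * ∑ p ∈ (univ.image z).offDiag, d p.1 p.2 := by
  have z_injective : Function.Injective z := hz.1
  rw [sum_image z_injective.injOn]
  refine (hz.sum_score_le ht).trans ?_
  gcongr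
  exact sum_sum_Iio_le_sum_offDiag_image z_injective hd

theorem stmt_2 {M : Type*} [MetricSpace M] [DecidableEq M]
    (q : M → ℝ) (hq : ∀ u, 0 ≤ q u)
    (lam : ℝ) (hlam0 : 0 < lam) (hlam1 : lam < 1)
    (k : ℕ) (hk : 1 ≤ k)
    (T : Finset M) (hT : k < T.card)
    (z : Fin k → M)
    (hz : IsGreedySel q (fun u v => dist u v) lam (1 - lam) T k z)
    (S : Finset M) (hS : S = Finset.univ.image z)
    (t : M) (ht : t ∈ T \ S) :
    (1 - lam) * (∑ i : Fin k, ((k - 1 - (i : ℕ) : ℕ) : ℝ) * dist t (z i)) +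
        lam * k * q t ≤ Fobj q lam S := by
  subst hS
  exact stmt_2_general (fun _ _ ↦ dist_nonneg) (sub_nonneg.2 hlam1.le) hz ht
end

section
/- Let λ ∈ (0,1) and k ≥ 1, let T ⊆ M be a finite set with |T| > k, and let S = {z_1, …, z_k} be produced by greedy selection of k items from T with parameter λ. Then for every t ∈ T ∖ S one has 2.5·F(S) ≥ (1−λ)·(k−1)·Σ_{i=1}^{k} d(t, z_i). -/
open Finset

/-!
Fix `t ∈ T \ S` and let `A` and `E` be the sums of `d(t, z_j)` and `d(z_i, z_j)` over all pairs
`j < i`. In every round `i` the point `t` competes with `z_i`, so adding the `k` greedy inequalities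
gives `λ k q(t) + (1 - λ) A ≤ λ Q(S) + (1 - λ) E`. On the other hand, `(k - 1) ∑ d(t, z_i)` is the
sum of `d(t, z_i) + d(t, z_j)` over the pairs `j < i`, and `d(t, z_i) ≤ d(t, z_j) + d(z_i, z_j)`
bounds it by `2 A + E`. As `D(S) = 2 E`, the bound follows, even with `2` in place of `2.5`.
-/

section PairSums

variable {ι : Type*} [LinearOrder ι] [Fintype ι] [LocallyFiniteOrderTop ι]
  [LocallyFiniteOrderBot ι]

theorem sum_sum_Iio_add_eq_sum_sum_compl {A : Type*} [AddCommMonoid A] (f : ι → ι → A) :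
    ∑ i, ∑ j ∈ Iio i, (f i j + f j i) = ∑ i, ∑ j ∈ {i}ᶜ, f i j :=
  sum_sum_Ioi_add_eq_sum_sum_off_diag (α := ιᵒᵈ) fun i j => f j i

theorem sum_sum_Iio_add_eq_card_sub_one_mul_sum {R : Type*} [Ring R] (g : ι → R) :
    ∑ i, ∑ j ∈ Iio i, (g i + g j) = (Fintype.card ι - 1) * ∑ i, g i := by
  rw [sum_sum_Iio_add_eq_sum_sum_compl fun i _ => g i, mul_sum]
  refine sum_congr rfl fun i _ => ?_
  have : 1 ≤ Fintype.card ι := Fintype.card_pos_iff.mpr ⟨i⟩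
  rw [sum_const, card_compl, card_singleton, nsmul_eq_mul, Nat.cast_sub this, Nat.cast_one]

theorem card_sub_one_mul_sum_dist_le {M : Type*} [PseudoMetricSpace M] (z : ι → M) (t : M) :
    (Fintype.card ι - 1) * ∑ i, dist t (z i) ≤
      2 * ∑ i, ∑ j ∈ Iio i, dist t (z j) + ∑ i, ∑ j ∈ Iio i, dist (z i) (z j) := by
  rw [← sum_sum_Iio_add_eq_card_sub_one_mul_sum]
  simp only [mul_sum, ← sum_add_distrib]
  refine sum_le_sum fun i _ => sum_le_sum fun j _ => ?_
  linarith [dist_triangle_right t (z i) (z j)]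

end PairSums

section Objective

variable {M : Type*} [MetricSpace M] [DecidableEq M]

theorem Fobj_nonneg {q : M → ℝ} (hq : ∀ u, 0 ≤ q u) {lam : ℝ} (hlam0 : 0 ≤ lam) (hlam1 : lam ≤ 1)
    (S : Finset M) : 0 ≤ Fobj q lam S :=
  add_nonneg (mul_nonneg hlam0 (sum_nonneg fun u _ => hq u))
    (mul_nonneg (sub_nonneg.mpr hlam1) (sum_nonneg fun _ _ => dist_nonneg))

theorem Dsum_eq_sum_sum_erase (S : Finset M) : Dsum S = ∑ u ∈ S, ∑ v ∈ S.erase u, dist u v :=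
  sum_finset_product _ _ _ fun p => by simp only [mem_offDiag, mem_erase]; tauto

theorem Dsum_image_univ {ι : Type*} [LinearOrder ι] [Fintype ι] [LocallyFiniteOrderTop ι]
    [LocallyFiniteOrderBot ι] {z : ι → M} (hz : Function.Injective z) :
    Dsum (univ.image z) = 2 * ∑ i, ∑ j ∈ Iio i, dist (z i) (z j) := by
  calc Dsum (univ.image z)
      = ∑ i, ∑ j ∈ {i}ᶜ, dist (z i) (z j) := by
        simp only [Dsum_eq_sum_sum_erase, sum_image hz.injOn, ← image_erase hz, compl_singleton]
    _ = ∑ i, ∑ j ∈ Iio i, (dist (z i) (z j) + dist (z j) (z i)) :=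
        (sum_sum_Iio_add_eq_sum_sum_compl _).symm
    _ = 2 * ∑ i, ∑ j ∈ Iio i, dist (z i) (z j) := by
        simp only [dist_comm (z _) (z _), ← two_mul, mul_sum]

end Objective

theorem IsGreedySel.sum_gain_le {ι : Type*} {qf : ι → ℝ} {df : ι → ι → ℝ} {a b : ℝ} {T : Finset ι}
    {k : ℕ} {z : Fin k → ι} (hz : IsGreedySel qf df a b T k z) {t : ι} (htT : t ∈ T)
    (ht : ∀ i, t ≠ z i) :
    a * (k * qf t) + b * ∑ i, ∑ j ∈ Iio i, df t (z j) ≤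
      a * ∑ i, qf (z i) + b * ∑ i, ∑ j ∈ Iio i, df (z i) (z j) := by
  obtain ⟨-, -, -, hround⟩ := hz
  simp only [filter_gt_eq_Iio] at hround
  calc a * (k * qf t) + b * ∑ i, ∑ j ∈ Iio i, df t (z j)
      = ∑ i : Fin k, (a * qf t + b * ∑ j ∈ Iio i, df t (z j)) := by
        simp [sum_add_distrib, mul_sum, mul_left_comm]
    _ ≤ ∑ i, (a * qf (z i) + b * ∑ j ∈ Iio i, df (z i) (z j)) :=
        sum_le_sum fun i _ => hround i t htT fun j _ => ht j
    _ = a * ∑ i, qf (z i) + b * ∑ i, ∑ j ∈ Iio i, df (z i) (z j) := by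
        simp only [sum_add_distrib, mul_sum]

theorem stmt_4_general {M : Type*} [MetricSpace M] [DecidableEq M] (q : M → ℝ) (lam : ℝ)
    (hlam1 : lam ≤ 1) (k : ℕ) (T : Finset M) (z : Fin k → M)
    (hz : IsGreedySel q (fun u v => dist u v) lam (1 - lam) T k z)
    (t : M) (ht : t ∈ T \ univ.image z) :
    2 * (lam * (k * q t)) + (1 - lam) * (k - 1) * ∑ i, dist t (z i) ≤
      2 * Fobj q lam (univ.image z) := by
  obtain ⟨htT, htz⟩ := mem_sdiff.mp ht
  have hgreedy := hz.sum_gain_le htT fun i h => htz (h ▸ mem_image_of_mem z (mem_univ i))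
  have htriangle := mul_le_mul_of_nonneg_left (card_sub_one_mul_sum_dist_le z t)
    (sub_nonneg.mpr hlam1)
  have hpairs : 0 ≤ (1 - lam) * ∑ i, ∑ j ∈ Iio i, dist (z i) (z j) :=
    mul_nonneg (sub_nonneg.mpr hlam1) (sum_nonneg fun _ _ => sum_nonneg fun _ _ => dist_nonneg)
  rw [Fintype.card_fin] at htriangle
  rw [Fobj, Qsum, sum_image hz.1.injOn, Dsum_image_univ hz.1]
  linarith

theorem stmt_4 {M : Type*} [MetricSpace M] [DecidableEq M]
    (q : M → ℝ) (hq : ∀ u, 0 ≤ q u)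
    (lam : ℝ) (hlam0 : 0 < lam) (hlam1 : lam < 1)
    (k : ℕ) (hk : 1 ≤ k)
    (T : Finset M) (hT : k < T.card)
    (z : Fin k → M)
    (hz : IsGreedySel q (fun u v => dist u v) lam (1 - lam) T k z)
    (S : Finset M) (hS : S = Finset.univ.image z)
    (t : M) (ht : t ∈ T \ S) :
    (1 - lam) * (k - 1) * (∑ i : Fin k, dist t (z i)) ≤ 2.5 * Fobj q lam S := by
  subst hS
  have hgain : 0 ≤ lam * (k * q t) := mul_nonneg hlam0.le (mul_nonneg k.cast_nonneg (hq t))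
  linarith [stmt_4_general q lam hlam1.le k T z hz t ht,
    Fobj_nonneg hq hlam0.le hlam1.le (univ.image z)]
end

section
/- (Mapping-decomposition bound from the proofs of Lemmas 2 and 5.) Let O ⊆ M be a finite set with |O| = k and let h : O → M be any map. Then Σ_{(u,v) ∈ O×O, u ≠ v} d(u, v) ≤ 2·(k−1)·Σ_{u ∈ O} d(u, h(u)) + Σ_{(u,v) ∈ O×O, u ≠ v} d(h(u), h(v)). -/
open Finset

section OffDiag

variable {ι A R : Type*}

-- For empty `s` both sides vanish, so the truncated `#s - 1` is harmless.
theorem sum_offDiag_fst [AddCommMonoid A] (s : Finset ι) (f : ι → A) :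
    ∑ p ∈ s.offDiag, f p.1 = (#s - 1) • ∑ i ∈ s, f i := by
  classical
  rw [sum_finset_product s.offDiag s (fun i ↦ s.erase i) (by grind), smul_sum]
  refine sum_congr rfl fun i hi ↦ ?_
  simp only [sum_const, card_erase_of_mem hi]

theorem sum_offDiag_snd [AddCommMonoid A] (s : Finset ι) (f : ι → A) :
    ∑ p ∈ s.offDiag, f p.2 = (#s - 1) • ∑ i ∈ s, f i := by
  rw [← sum_offDiag_fst]
  exact sum_equiv (Equiv.prodComm ι ι) (by grind) fun _ _ ↦ rfl

theorem sum_offDiag_fst_add_snd [NonAssocRing R] (s : Finset ι) (f : ι → R) :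
    ∑ p ∈ s.offDiag, (f p.1 + f p.2) = 2 * ((#s : R) - 1) * ∑ i ∈ s, f i := by
  rcases s.eq_empty_or_nonempty with rfl | hs
  · simp
  · rw [sum_add_distrib, sum_offDiag_fst, sum_offDiag_snd, nsmul_eq_mul,
      Nat.cast_pred hs.card_pos, two_mul, add_mul]

end OffDiag

theorem stmt_19_general {ι α : Type*} [PseudoMetricSpace α]
    (s : Finset ι) (f g : ι → α) :
    ∑ p ∈ s.offDiag, dist (f p.1) (f p.2) ≤
      2 * ((#s : ℝ) - 1) * (∑ i ∈ s, dist (f i) (g i)) +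
        ∑ p ∈ s.offDiag, dist (g p.1) (g p.2) :=
  calc ∑ p ∈ s.offDiag, dist (f p.1) (f p.2)
    _ ≤ ∑ p ∈ s.offDiag,
          (dist (f p.1) (g p.1) + dist (f p.2) (g p.2) + dist (g p.1) (g p.2)) :=
        sum_le_sum fun _ _ ↦ dist_triangle4_right ..
    _ = 2 * ((#s : ℝ) - 1) * (∑ i ∈ s, dist (f i) (g i)) +
          ∑ p ∈ s.offDiag, dist (g p.1) (g p.2) := by
        rw [sum_add_distrib, sum_offDiag_fst_add_snd s fun i ↦ dist (f i) (g i)]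

theorem stmt_19 {M : Type*} [MetricSpace M] [DecidableEq M]
    (k : ℕ) (O : Finset M) (hO : O.card = k) (h : M → M) :
    Dsum O ≤ 2 * ((k : ℝ) - 1) * (∑ u ∈ O, dist u (h u)) +
      ∑ p ∈ O.offDiag, dist (h p.1) (h p.2) := by
  subst hO
  exact stmt_19_general O id h
end
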